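/- arXiv:2410.20262 — 4 statements merged into one kernel-verified Lean document; each statement's English description precedes it below -/
import Mathlib

section
/- Let p be an odd prime. The univariate polynomial B(t) = b_p(t,−t) ∈ 𝔽_p[t] has degree exactly (p²−1)/2, and its constant coefficient equals 1; in particular the constant coefficient is nonzero, so 0 is not a root of B. -/
open Polynomial

/-- `bp p` is the coefficient of `x^(2A)` in `((x-1)^2 (x-t1)(x-t2))^A`, where
`A = (p^2-1)/4`, viewed as a polynomial in `x` over the polynomial ring in two
variables over `ZMod p`. -/
noncomputable def bp (p : ℕ) : MvPolynomial (Fin 2) (ZMod p) :=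
  ((((X : Polynomial (MvPolynomial (Fin 2) (ZMod p))) - 1) ^ 2 *
      (X - C (MvPolynomial.X 0)) * (X - C (MvPolynomial.X 1))) ^ ((p ^ 2 - 1) / 4)).coeff
    (2 * ((p ^ 2 - 1) / 4))

/-- `Bp p` is the univariate polynomial `B(t) = b_p(t, -t)` over `ZMod p`. -/
noncomputable def Bp (p : ℕ) : Polynomial (ZMod p) :=
  MvPolynomial.aeval ![(X : Polynomial (ZMod p)), -X] (bp p)

theorem Bp_eq_sum (p : ℕ) : ∀ A, A = (p ^ 2 - 1) / 4 → Bp p = ∑ k ∈ Finset.range (A + 1),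
    C ((-1 : ZMod p) ^ (2 * k) * ((2 * A).choose (2 * A - 2 * k) : ZMod p) *
      (-1) ^ (A - k) * (A.choose k : ZMod p)) * X ^ (2 * (A - k)) := by
  intro A hA
  unfold Bp bp
  rw [← hA]
  set f : MvPolynomial (Fin 2) (ZMod p) →+* (ZMod p)[X] :=
    (MvPolynomial.aeval ![(X : Polynomial (ZMod p)), -X]).toRingHom with hf
  change f _ = _
  have h0 : f (MvPolynomial.X 0) = X := by simp [hf]
  have h1 : f (MvPolynomial.X 1) = -X := by simp [hf]
  rw [← coeff_map]
  simp only [Polynomial.map_pow, Polynomial.map_mul, Polynomial.map_sub, map_X, map_C,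
    Polynomial.map_one, h0, h1]
  have e : (((X : (ZMod p)[X][X]) - 1) ^ 2 * (X - C X) * (X - C (-X))) ^ A
      = ∑ k ∈ Finset.range (A + 1), ((X + C (-1)) ^ (2 * A) *
          C ((-X ^ 2) ^ (A - k) * (A.choose k : (ZMod p)[X]))) * X ^ (2 * k) := by
    have : (((X : (ZMod p)[X][X]) - 1) ^ 2 * (X - C X) * (X - C (-X)))
      = (X + C (-1)) ^ 2 * (X ^ 2 + C (-X ^ 2)) := by
      simp only [C_neg, C_pow, C_1]; ring
    rw [this, mul_pow, ← pow_mul, add_pow (X ^ 2), Finset.mul_sum]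
    refine Finset.sum_congr rfl fun k _ => ?_
    simp only [C_mul, C_pow, C_eq_natCast, map_natCast]
    ring
  rw [e, finsetSum_coeff]
  refine Finset.sum_congr rfl fun k hk => ?_
  have hk' : k ≤ A := by simpa [Nat.lt_succ_iff] using hk
  rw [coeff_mul_X_pow', if_pos (by omega), coeff_mul_C, coeff_X_add_C_pow,
    show 2 * A - (2 * A - 2 * k) = 2 * k by omega, neg_pow (X ^ 2 : (ZMod p)[X]), ← pow_mul]
  simp only [C_mul, C_pow, C_neg, C_1, map_natCast]
  ring

theorem stmt5 (p : ℕ) [Fact p.Prime] (hodd : p % 2 = 1) :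
    (Bp p).degree = (((p ^ 2 - 1) / 2 : ℕ) : WithBot ℕ) ∧
    (Bp p).coeff 0 = 1 ∧ (Bp p).coeff 0 ≠ 0 ∧ ¬ (Bp p).IsRoot 0 := by
  obtain ⟨A, hA⟩ : ∃ A, A = (p ^ 2 - 1) / 4 := ⟨_, rfl⟩
  have hs := Bp_eq_sum p A hA
  have hA2 : (p ^ 2 - 1) / 2 = 2 * A := by
    obtain ⟨m, rfl⟩ : ∃ m, p = 2 * m + 1 := ⟨p / 2, by omega⟩
    have : (2 * m + 1) ^ 2 - 1 = 4 * (m * (m + 1)) := by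
      rw [show (2 * m + 1) ^ 2 = 4 * (m * (m + 1)) + 1 by ring]; rfl
    omega
  have hc0 : (Bp p).coeff 0 = 1 := by
    rw [hs, finsetSum_coeff, Finset.sum_eq_single A]
    · simp [pow_mul]
    · intro k hk hne
      have : k < A + 1 := by simpa using hk
      rw [coeff_C_mul_X_pow, if_neg (by omega)]
    · simp
  have hcA : (Bp p).coeff (2 * A) = (-1) ^ A := by
    rw [hs, finsetSum_coeff, Finset.sum_eq_single 0]
    · rw [coeff_C_mul_X_pow, if_pos (by omega)]
      simp
    · intro k hk hne
      have : k < A + 1 := by simpa using hk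
      rw [coeff_C_mul_X_pow, if_neg (by omega)]
    · simp
  have hle : (Bp p).degree ≤ ((2 * A : ℕ) : WithBot ℕ) := by
    rw [hs]
    refine (degree_sum_le _ _).trans (Finset.sup_le fun k _ => ?_)
    refine (degree_C_mul_X_pow_le _ _).trans ?_
    exact_mod_cast (by omega : 2 * (A - k) ≤ 2 * A)
  have hne : (Bp p).coeff 0 ≠ 0 := by rw [hc0]; exact one_ne_zero
  refine ⟨?_, hc0, hne, ?_⟩
  · rw [hA2]
    refine le_antisymm hle (le_degree_of_ne_zero ?_)
    rw [hcA]
    exact pow_ne_zero _ (neg_ne_zero.mpr one_ne_zero)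
  · rw [IsRoot.def, ← coeff_zero_eq_eval_zero]
    exact hne
end

section
/- Let p be an odd prime. The coefficient of t² in the polynomial B(t) = b_p(t,−t) ∈ 𝔽_p[t] equals 3·32⁻¹ in 𝔽_p (note 32 is invertible in 𝔽_p since p is odd). -/
open Polynomial

theorem ring_aux {S : Type*} [CommRing S] (x y u k : S) (A : ℕ)
    (hk : (x ^ 2 + -y ^ 2) ^ A = (x ^ 2) ^ A + A * (x ^ 2) ^ (A - 1) * (-y ^ 2) + k * (-y ^ 2) ^ 2) :
    (u ^ 2 * (x - y) * (x - -y)) ^ A =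
      u ^ (2 * A) * x ^ (2 * A) + (-(A : S) * y ^ 2) * (u ^ (2 * A) * x ^ (2 * (A - 1))) +
      y ^ 4 * (u ^ (2 * A) * k) := by
  have : (u ^ 2 * (x - y) * (x - -y)) ^ A = u ^ (2 * A) * (x ^ 2 + -y ^ 2) ^ A := by
    rw [pow_mul, ← mul_pow]
    congr 1
    ring
  rw [this, hk, pow_mul x, pow_mul x]
  ring

theorem Bp_eq_aux (p : ℕ) : Bp p = (((((X : Polynomial (Polynomial (ZMod p))) - C 1) ^ 2 *
      (X - C X) * (X - C (-X))) ^ ((p ^ 2 - 1) / 4)).coeff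
    (2 * ((p ^ 2 - 1) / 4))) := by
  unfold Bp bp
  rw [← AlgHom.coe_toRingHom, ← Polynomial.coeff_map]
  simp [Polynomial.map_pow, Polynomial.map_mul, Polynomial.map_sub]

theorem coeff_aux {R : Type*} [CommRing R] (A : ℕ) (hA : 1 ≤ A) :
    ((((((X : Polynomial (Polynomial R)) - C 1) ^ 2 *
      (X - C X) * (X - C (-X))) ^ A).coeff (2 * A)).coeff 2) =
      - (A : R) * ((2 * A).choose 2 : ℕ) := by
  obtain ⟨k, hk⟩ := Polynomial.powAddExpansion ((X : Polynomial (Polynomial R)) ^ 2)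
    (C (-X ^ 2)) A
  have h1 : (((X : Polynomial (Polynomial R)) - C 1) ^ 2 * (X - C X) * (X - C (-X))) ^ A =
      (X - C 1) ^ (2 * A) * X ^ (2 * A) +
      C (-(A : Polynomial R) * X ^ 2) * ((X - C 1) ^ (2 * A) * X ^ (2 * (A - 1))) +
      C (X ^ 4) * ((X - C 1) ^ (2 * A) * k) := by
    simp only [map_neg, map_pow, map_mul, map_natCast] at hk ⊢
    exact ring_aux _ _ _ _ _ hk
  have h2 : 2 * A = 2 + 2 * (A - 1) := by omega
  have e1 : (((X : Polynomial (Polynomial R)) - C 1) ^ (2 * A) * X ^ (2 * A)).coeff (2 * A) = 1 := by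
    have := coeff_mul_X_pow (((X : Polynomial (Polynomial R)) - C 1) ^ (2 * A)) (2 * A) 0
    rw [zero_add] at this
    rw [this, sub_eq_add_neg, ← C_neg, coeff_X_add_C_pow]
    simp [pow_mul]
  have e2 : (((X : Polynomial (Polynomial R)) - C 1) ^ (2 * A) * X ^ (2 * (A - 1))).coeff (2 * A)
      = (((2 * A).choose 2 : ℕ) : Polynomial R) := by
    have := coeff_mul_X_pow (((X : Polynomial (Polynomial R)) - C 1) ^ (2 * A)) (2 * (A - 1)) 2
    rw [← h2] at this
    rw [this, sub_eq_add_neg, ← C_neg, coeff_X_add_C_pow]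
    have h3 : 2 * A - 2 = 2 * (A - 1) := by omega
    rw [h3]
    simp [pow_mul]
  rw [h1, coeff_add (R := Polynomial R), coeff_add (R := Polynomial R), coeff_C_mul, coeff_C_mul, e1, e2]
  have e3 : (-(A : Polynomial R) * X ^ 2 * (((2 * A).choose 2 : ℕ) : Polynomial R)) =
    C (- (A : R) * (((2 * A).choose 2 : ℕ) : R)) * X ^ 2 := by
    simp only [map_neg, map_mul, map_natCast]
    ring
  rw [e3, coeff_add, coeff_add, coeff_C_mul]
  simp [coeff_X_pow_mul', coeff_one]

theorem stmt6 (p : ℕ) [Fact p.Prime] (hodd : p % 2 = 1) :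
    (Bp p).coeff 2 = 3 * (32 : ZMod p)⁻¹ := by
  have hp : p.Prime := Fact.out
  have h4 : 4 * ((p ^ 2 - 1) / 4) + 1 = p ^ 2 := by
    obtain ⟨m, hm⟩ : ∃ m, p = 2 * m + 1 := ⟨p / 2, by omega⟩
    have : p ^ 2 = 4 * (m ^ 2 + m) + 1 := by rw [hm]; ring
    omega
  rw [Bp_eq_aux]
  generalize (p ^ 2 - 1) / 4 = A at h4 ⊢
  have hA : 1 ≤ A := by
    have := hp.two_le
    have : 2 ^ 2 ≤ p ^ 2 := Nat.pow_le_pow_left this 2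
    omega
  rw [coeff_aux A hA]
  have hc : (2 * A).choose 2 = A * (2 * A - 1) := by
    rw [Nat.choose_two_right, mul_assoc]
    exact Nat.mul_div_cancel_left _ (by norm_num)
  have h5 : (4 : ZMod p) * A + 1 = 0 := by
    have := congrArg (Nat.cast : ℕ → ZMod p) h4
    simpa using this
  have h2 : (2 : ZMod p) ≠ 0 := by
    intro h
    have : ((2 : ℕ) : ZMod p) = 0 := by exact_mod_cast h
    rw [ZMod.natCast_eq_zero_iff] at this
    have := Nat.le_of_dvd (by norm_num) this
    have := hp.two_le
    have : p = 2 := by omega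
    omega
  have h32 : (32 : ZMod p) ≠ 0 := by
    have : (32 : ZMod p) = 2 ^ 5 := by norm_num
    rw [this]; exact pow_ne_zero _ h2
  rw [hc, ← div_eq_mul_inv, eq_div_iff h32]
  push_cast [Nat.cast_sub (show 1 ≤ 2 * A by omega)]
  have h6 : (4 : ZMod p) * A = -1 := by linear_combination h5
  linear_combination (-(16 * (A : ZMod p) ^ 2) + 12 * A - 3) * h5
end

section
/- For every integer A ≥ 1, let b(t₁,t₂) ∈ ℤ[t₁,t₂] be the coefficient of x^{2A} in ((x−1)²(x−t₁)(x−t₂))^A, viewed as a polynomial in x with coefficients in ℤ[t₁,t₂]. Then the coefficient of t² in the univariate polynomial b(t,−t) ∈ ℤ[t] equals −A²(2A−1). -/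
open Polynomial

/-- `bZ A` is the coefficient of `x^(2A)` in `((x-1)^2 (x-t1)(x-t2))^A` over `ℤ[t1,t2]`. -/
noncomputable def bZ (A : ℕ) : MvPolynomial (Fin 2) ℤ :=
  ((((X : Polynomial (MvPolynomial (Fin 2) ℤ)) - 1) ^ 2 *
      (X - C (MvPolynomial.X 0)) * (X - C (MvPolynomial.X 1))) ^ A).coeff (2 * A)

theorem stmt7_aux (n : ℕ) (k : ℕ) :
    (((X : Polynomial (Polynomial ℤ)) - 1) ^ n).coeff k = C ((-1 : ℤ) ^ (n - k) * (n.choose k : ℤ)) := by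
  have := coeff_X_add_C_pow (-1 : Polynomial ℤ) n k
  rw [C_neg, C_1, ← sub_eq_add_neg] at this
  rw [this]
  simp

theorem stmt7 (A : ℕ) (hA : 1 ≤ A) :
    (MvPolynomial.aeval ![(X : Polynomial ℤ), -X] (bZ A)).coeff 2
      = -(A : ℤ) ^ 2 * (2 * (A : ℤ) - 1) := by
  obtain ⟨n, rfl⟩ : ∃ n, A = n + 1 := ⟨A - 1, by omega⟩
  have h1 : MvPolynomial.aeval ![(X : Polynomial ℤ), -X] (bZ (n + 1)) =
      ((((X : Polynomial (Polynomial ℤ)) - 1) ^ (2 * (n + 1))) *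
        (X ^ 2 + C (-X ^ 2)) ^ (n + 1)).coeff (2 * (n + 1)) := by
    unfold bZ
    rw [← AlgHom.coe_toRingHom, ← coeff_map]
    congr 1
    simp only [Polynomial.map_pow, Polynomial.map_mul, Polynomial.map_sub, map_X, map_C,
      Polynomial.map_one, MvPolynomial.aeval_X, RingHom.coe_coe]
    rw [pow_mul, ← mul_pow]
    refine congrArg (fun q => q ^ (n + 1)) ?_
    simp only [Matrix.cons_val_zero, Matrix.cons_val_one, map_neg, map_pow]
    ring
  rw [h1]
  obtain ⟨k, hk⟩ := Polynomial.powAddExpansion (X ^ 2 : Polynomial (Polynomial ℤ)) (C (-X ^ 2)) (n + 1)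
  have e : (((X : Polynomial (Polynomial ℤ)) - 1) ^ (2 * (n + 1))) *
        (X ^ 2 + C (-X ^ 2)) ^ (n + 1) =
      (X - 1) ^ (2 * (n + 1)) * X ^ (2 * (n + 1)) +
      (X - 1) ^ (2 * (n + 1)) * X ^ (2 * n) * C (-((n : Polynomial ℤ) + 1) * X ^ 2)
      + ((X - 1) ^ (2 * (n + 1)) * k) * C (X ^ 4) := by
    rw [hk]
    simp only [Nat.add_sub_cancel]
    push_cast
    simp only [map_mul, map_neg, map_add, map_pow, map_natCast, map_one]
    ring
  rw [e]
  simp only [coeff_add, coeff_mul_C]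
  have e0 : (((X : Polynomial (Polynomial ℤ)) - 1) ^ (2 * (n + 1)) * X ^ (2 * (n + 1))).coeff (2 * (n + 1))
      = C (1 : ℤ) := by
    rw [coeff_mul_X_pow', if_pos le_rfl, Nat.sub_self, stmt7_aux]
    simp [pow_mul]
  have e2 : 2 * (n + 1) = 2 + 2 * n := by ring
  have e3 : (((X : Polynomial (Polynomial ℤ)) - 1) ^ (2 * (n + 1)) * X ^ (2 * n)).coeff (2 * (n + 1))
      = C (((2 * (n + 1)).choose 2 : ℤ)) := by
    conv_lhs => rw [show (2 * (n + 1)) = 2 + 2 * n by ring]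
    rw [coeff_mul_X_pow, stmt7_aux]
    simp [pow_mul, e2]
  have e4 : (((2 * (n + 1)).choose 2 : ℕ) : ℤ) = (n + 1) * (2 * n + 1) := by
    have : (2 * (n + 1)).choose 2 = (n + 1) * (2 * n + 1) := by
      rw [Nat.choose_two_right, show 2 * (n + 1) * (2 * (n + 1) - 1) = 2 * ((n + 1) * (2 * n + 1)) by
        rw [show 2 * (n + 1) - 1 = 2 * n + 1 by omega]; ring]
      simp
    rw [this]; push_cast; ring
  rw [e0, e3, e4, coeff_mul_X_pow', coeff_C_mul, coeff_C]
  rw [show (-((n : Polynomial ℤ) + 1) * X ^ 2) = C (-((n : ℤ) + 1)) * X ^ 2 by simp,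
    coeff_C_mul_X_pow]
  simp
  ring
end

section
/- Let p be a prime with p ≡ 3 (mod 4) and A = (p²−1)/4. Then B(t) = b_p(t,−t) is not equal to the polynomial (1−t²)^A in 𝔽_p[t]. -/
open Polynomial

/-- Explicit expansion of `B(t)`. -/
theorem Bp_expand (p : ℕ) (A : ℕ) (hA : A = (p ^ 2 - 1) / 4) :
    Bp p = ∑ k ∈ Finset.range (A + 1),
      C ((-1 : ZMod p) ^ k * (A.choose k : ZMod p) * ((2 * A).choose (2 * k) : ZMod p)) *
        X ^ (2 * k) := by
  have h1 : Bp p = ((((X : Polynomial (Polynomial (ZMod p))) + C (-1)) ^ (2 * A)) *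
      (C (-X ^ 2) + X ^ 2) ^ A).coeff (2 * A) := by
    have hm : ((((X : Polynomial (MvPolynomial (Fin 2) (ZMod p))) - 1) ^ 2 *
        (X - C (MvPolynomial.X 0)) * (X - C (MvPolynomial.X 1))) ^ A).map
        (MvPolynomial.aeval ![(X : Polynomial (ZMod p)), -X] :
          MvPolynomial (Fin 2) (ZMod p) →ₐ[ZMod p] Polynomial (ZMod p)).toRingHom =
        (((X : Polynomial (Polynomial (ZMod p))) + C (-1)) ^ (2 * A)) *
          (C (-X ^ 2) + X ^ 2) ^ A := by
      rw [pow_mul, ← mul_pow, Polynomial.map_pow]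
      refine congrArg (fun q => q ^ A) ?_
      simp only [Polynomial.map_pow, Polynomial.map_mul, Polynomial.map_sub, Polynomial.map_X,
        Polynomial.map_one, Polynomial.map_C, AlgHom.toRingHom_eq_coe, RingHom.coe_coe,
        MvPolynomial.aeval_X, Matrix.cons_val_zero, Matrix.cons_val_one, C_neg, C_pow, C_1]
      ring
    rw [← hm, Polynomial.coeff_map]
    unfold Bp bp
    rw [← hA]
    rfl
  rw [h1, add_pow (C (-X ^ 2 : Polynomial (ZMod p))), Finset.mul_sum, Polynomial.finsetSum_coeff]
  refine Finset.sum_congr rfl fun k hk => ?_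
  have hk' : k ≤ A := by simpa [Nat.lt_succ_iff] using hk
  have e : ((X : Polynomial (Polynomial (ZMod p))) + C (-1)) ^ (2 * A) *
      (C (-X ^ 2) ^ k * (X ^ 2) ^ (A - k) * (A.choose k : Polynomial (Polynomial (ZMod p))))
      = C ((-X ^ 2) ^ k * (A.choose k : Polynomial (ZMod p))) *
        (((X : Polynomial (Polynomial (ZMod p))) + C (-1)) ^ (2 * A)) * X ^ (2 * (A - k)) := by
    rw [pow_mul X 2 (A - k), C_mul, C_pow, map_natCast]
    ring
  have e2 : 2 * A = 2 * k + 2 * (A - k) := by omega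
  rw [e]
  conv_lhs => rw [show ∀ q : Polynomial (Polynomial (ZMod p)), q.coeff (2 * A) =
    q.coeff (2 * k + 2 * (A - k)) from fun q => by rw [← e2]]
  rw [coeff_mul_X_pow, coeff_C_mul, coeff_X_add_C_pow,
    show 2 * A - 2 * k = 2 * (A - k) by omega, pow_mul (-1) 2]
  simp only [even_two, Even.neg_pow, one_pow, one_mul, C_mul, C_pow, C_neg, C_1, map_natCast]
  rw [neg_pow (X ^ 2 : Polynomial (ZMod p)) k, ← pow_mul]
  ring

theorem stmt11 (p : ℕ) [Fact p.Prime] (hp : p % 4 = 3) (A : ℕ) (hA : A = (p ^ 2 - 1) / 4) :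
    Bp p ≠ (1 - X ^ 2) ^ A := by
  intro h
  have hpp : p.Prime := Fact.out
  have h4 : 4 * A + 1 = p ^ 2 := by
    obtain ⟨m, rfl⟩ : ∃ m, p = 4 * m + 3 := ⟨p / 4, by omega⟩
    have : (4 * m + 3) ^ 2 = 4 * (4 * m ^ 2 + 6 * m + 2) + 1 := by ring
    omega
  have hA1 : 1 ≤ A := by
    have : 3 ≤ p := by omega
    nlinarith
  have h4' : (4 : ZMod p) * A + 1 = 0 := by
    have := congrArg (Nat.cast : ℕ → ZMod p) h4
    push_cast at this
    simpa using this
  have hR : ((1 - X ^ 2 : Polynomial (ZMod p)) ^ A) = ∑ k ∈ Finset.range (A + 1),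
      C ((-1 : ZMod p) ^ k * (A.choose k : ZMod p)) * X ^ (2 * k) := by
    rw [show (1 - X ^ 2 : Polynomial (ZMod p)) = -X ^ 2 + 1 by ring, add_pow]
    refine Finset.sum_congr rfl fun k _ => ?_
    simp only [one_pow, C_mul, C_pow, C_neg, C_1, map_natCast]
    rw [neg_pow (X ^ 2 : Polynomial (ZMod p)) k, ← pow_mul]
    ring
  have key : ∀ f : ℕ → ZMod p,
      (∑ k ∈ Finset.range (A + 1), C (f k) * X ^ (2 * k)).coeff 2 = f 1 := by
    intro f
    rw [finsetSum_coeff, Finset.sum_eq_single 1]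
    · simp
    · intro b _ hb
      rw [coeff_C_mul_X_pow, if_neg (by omega)]
    · intro h1
      exact absurd (Finset.mem_range.2 (by omega)) h1
  have h2 := congrArg (fun q => Polynomial.coeff q 2) h
  simp only [Bp_expand p A hA, hR] at h2
  rw [key (fun k => (-1 : ZMod p) ^ k * (A.choose k : ZMod p) * ((2 * A).choose (2 * k) : ZMod p)),
    key (fun k => (-1 : ZMod p) ^ k * (A.choose k : ZMod p))] at h2
  have hc : (2 * A).choose (2 * 1) + A = 2 * A * A := by
    rw [mul_one, Nat.choose_two_right]
    obtain ⟨a, rfl⟩ : ∃ a, A = a + 1 := ⟨A - 1, by omega⟩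
    rw [show 2 * (a + 1) * (2 * (a + 1) - 1) = 2 * ((a + 1) * (2 * (a + 1) - 1)) by ring,
      Nat.mul_div_cancel_left _ (by norm_num), show 2 * (a + 1) - 1 = 2 * a + 1 by omega]
    ring
  have hc' : (((2 * A).choose (2 * 1) : ℕ) : ZMod p) + A = 2 * A * A := by
    exact_mod_cast congrArg (Nat.cast : ℕ → ZMod p) hc
  simp only [pow_one, Nat.choose_one_right] at h2
  generalize (((2 * A).choose (2 * 1) : ℕ) : ZMod p) = c at h2 hc'
  have hA0 : (A : ZMod p) ≠ 0 := by
    intro h0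
    rw [h0] at h4'
    simp at h4'
  have hc1 : c = 1 := by
    have : (A : ZMod p) * (c - 1) = 0 := by linear_combination -h2
    rcases mul_eq_zero.1 this with h | h
    · exact absurd h hA0
    · linear_combination h
  have h5 : ((5 : ℕ) : ZMod p) = 0 := by
    push_cast
    rw [hc1] at hc'
    linear_combination 8 * hc' + (4 * (A : ZMod p) - 3) * h4'
  rw [ZMod.natCast_eq_zero_iff] at h5
  have := (Nat.prime_dvd_prime_iff_eq hpp Nat.prime_five).1 h5
  omega
end
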